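/- arXiv:2101.00623 — 2 statements merged into one kernel-verified Lean document; each statement's English description precedes it below -/
import Mathlib

section
/- Let F ∈ C²(ℝ^(2N)) satisfy the μ-ellipticity lower bound λ(1+|Z|)^(−μ)|Y|² ≤ D²F(Z)(Y,Y) for all Y, Z ∈ ℝ^(2N), with λ > 0 and μ > 1, and set θ(r) := (λ/(μ−1))[1 − (1+r)^(1−μ)] for r ≥ 0. Then for every Z ∈ ℝ^(2N) one has θ(|Z|)·|Z| ≤ (∇F(Z) − ∇F(0)) : Z. -/
open scoped RealInnerProductSpace

/-!
Write `A = DF`. Along the ray `t ↦ t • Z` the derivative of `A (t • Z) Z` is `DA (t • Z) Z Z`, which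
ellipticity bounds below by `λ (1 + t |Z|)^(-μ) |Z|²`. This lower bound is the derivative of
`t ↦ θ (t |Z|) |Z|`, so comparing increments over `[0, 1]` gives the claim.
-/

open Set

theorem hasDerivAt_apply_smul {𝕜 E G H : Type*} [NontriviallyNormedField 𝕜]
    [NormedAddCommGroup E] [NormedSpace 𝕜 E] [NormedAddCommGroup G] [NormedSpace 𝕜 G]
    [NormedAddCommGroup H] [NormedSpace 𝕜 H] {A : E → G →L[𝕜] H} {A' : E →L[𝕜] G →L[𝕜] H}
    {x : E} {t : 𝕜} (hA : HasFDerivAt A A' (t • x)) (y : G) :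
    HasDerivAt (fun s : 𝕜 ↦ A (s • x) y) (A' x y) t := by
  have hray : HasDerivAt (fun s : 𝕜 ↦ s • x) x t := by
    simpa only [id, one_smul] using (hasDerivAt_id t).smul_const x
  have hcomp : HasDerivAt (fun s : 𝕜 ↦ A (s • x)) (A' x) t := hA.comp_hasDerivAt t hray
  simpa only [map_zero, add_zero] using hcomp.clm_apply (hasDerivAt_const t y)

theorem hasDerivAt_const_mul_one_sub_one_add_rpow (lam : ℝ) {μ r : ℝ} (hμ : μ ≠ 1)
    (hr : 0 < 1 + r) :
    HasDerivAt (fun s : ℝ ↦ lam / (μ - 1) * (1 - (1 + s) ^ (1 - μ)))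
      (lam * (1 + r) ^ (-μ)) r := by
  have hμ' : μ - 1 ≠ 0 := sub_ne_zero.mpr hμ
  have hpow : HasDerivAt (fun s : ℝ ↦ (1 + s) ^ (1 - μ)) ((1 - μ) * (1 + r) ^ (-μ)) r := by
    simpa [sub_sub_cancel_left] using
      ((hasDerivAt_id r).const_add 1).rpow_const (p := 1 - μ) (Or.inl hr.ne')
  refine ((hpow.const_sub 1).const_mul (lam / (μ - 1))).congr_deriv ?_
  field_simp
  ring

section RadialEllipticity

variable {E : Type*} [NormedAddCommGroup E] [NormedSpace ℝ E] {A : E → StrongDual ℝ E}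

theorem mul_sq_norm_le_fderiv_smul_apply {φ : ℝ → ℝ}
    (hell : ∀ x, φ ‖x‖ * ‖x‖ ^ 2 ≤ fderiv ℝ A x x x) {t : ℝ} (ht : 0 < t) (x : E) :
    φ (t * ‖x‖) * ‖x‖ ^ 2 ≤ fderiv ℝ A (t • x) x x := by
  have hscaled : φ (t * ‖x‖) * (t * ‖x‖) ^ 2 ≤ t * (t * fderiv ℝ A (t • x) x x) := by
    simpa [norm_smul, abs_of_pos ht] using hell (t • x)
  refine le_of_mul_le_mul_left ?_ (pow_pos ht 2)
  linarith

theorem sub_mul_norm_le_sub_apply {φ Φ : ℝ → ℝ}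
    (hΦ : ∀ r, 0 ≤ r → HasDerivAt Φ (φ r) r) (hA : Differentiable ℝ A)
    (hell : ∀ x, φ ‖x‖ * ‖x‖ ^ 2 ≤ fderiv ℝ A x x x) (x : E) :
    (Φ ‖x‖ - Φ 0) * ‖x‖ ≤ (A x - A 0) x := by
  have hderiv (t : ℝ) (ht : 0 ≤ t) : HasDerivAt (fun s ↦ A (s • x) x - Φ (s * ‖x‖) * ‖x‖)
      (fderiv ℝ A (t • x) x x - φ (t * ‖x‖) * ‖x‖ ^ 2) t := by
    have hprofile : HasDerivAt (fun s ↦ Φ (s * ‖x‖) * ‖x‖) (φ (t * ‖x‖) * ‖x‖ ^ 2) t := by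
      simpa [pow_two, mul_assoc] using
        ((hΦ _ (by positivity)).comp t (hasDerivAt_mul_const ‖x‖)).mul_const ‖x‖
    exact (hasDerivAt_apply_smul (hA _).hasFDerivAt x).sub hprofile
  have hmono : MonotoneOn (fun s ↦ A (s • x) x - Φ (s * ‖x‖) * ‖x‖) (Icc 0 1) := by
    refine monotoneOn_of_hasDerivWithinAt_nonneg (convex_Icc 0 1)
      (fun t ht ↦ (hderiv t ht.1).continuousAt.continuousWithinAt)
      (fun t ht ↦ (hderiv t (interior_subset ht).1).hasDerivWithinAt) fun t ht ↦ ?_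
    rw [interior_Icc] at ht
    exact sub_nonneg.mpr (mul_sq_norm_le_fderiv_smul_apply hell ht.1 x)
  have hends : A 0 x - Φ 0 * ‖x‖ ≤ A x x - Φ ‖x‖ * ‖x‖ := by
    simpa using hmono (left_mem_Icc.mpr zero_le_one) (right_mem_Icc.mpr zero_le_one) zero_le_one
  rw [sub_mul, sub_apply]
  linarith

theorem statement5_general {lam μ : ℝ} (hμ : μ ≠ 1) (hA : Differentiable ℝ A)
    (hell : ∀ x, lam * (1 + ‖x‖) ^ (-μ) * ‖x‖ ^ 2 ≤ fderiv ℝ A x x x) (x : E) :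
    lam / (μ - 1) * (1 - (1 + ‖x‖) ^ (1 - μ)) * ‖x‖ ≤ (A x - A 0) x := by
  simpa using sub_mul_norm_le_sub_apply (φ := fun r ↦ lam * (1 + r) ^ (-μ))
    (fun r hr ↦ hasDerivAt_const_mul_one_sub_one_add_rpow lam hμ (by positivity)) hA hell x

end RadialEllipticity

/-- if `F ∈ C²(ℝ^{2N})` satisfies the `μ`-ellipticity lower bound and
`θ(r) = (λ/(μ−1))[1 − (1+r)^{1−μ}]`, then `θ(|Z|)|Z| ≤ (∇F(Z) − ∇F(0)) : Z` for all `Z`. -/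
theorem statement5 {N : ℕ} (F : EuclideanSpace ℝ (Fin N × Fin 2) → ℝ)
    (lam μ : ℝ) (hlam : 0 < lam) (hμ : 1 < μ)
    (hF : ContDiff ℝ 2 F)
    (hell : ∀ Z Y : EuclideanSpace ℝ (Fin N × Fin 2),
      lam * (1 + ‖Z‖) ^ (-μ) * ‖Y‖ ^ 2 ≤ iteratedFDeriv ℝ 2 F Z ![Y, Y])
    (θ : ℝ → ℝ) (hθ : ∀ r : ℝ, 0 ≤ r → θ r = lam / (μ - 1) * (1 - (1 + r) ^ (1 - μ))) :
    ∀ Z : EuclideanSpace ℝ (Fin N × Fin 2),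
      θ ‖Z‖ * ‖Z‖ ≤ ⟪gradient F Z - gradient F 0, Z⟫ := by
  intro Z
  rw [hθ _ (norm_nonneg Z), inner_sub_left, inner_gradient_left, inner_gradient_left]
  have hDF : Differentiable ℝ (fderiv ℝ F) :=
    (hF.fderiv_right one_add_one_eq_two.le).differentiable one_ne_zero
  exact statement5_general hμ.ne' hDF
    (fun x ↦ by simpa [iteratedFDeriv_two_apply] using hell x x) Z
end

section
/- Fix μ > 1 and define F : ℝ^(2N) → ℝ by F(Z) := ∫₀^{|Z|} ∫₀^{s} (1+r)^(−μ) dr ds. Then F is of class C², there is a constant M > 0 with |∇F(Z)| ≤ M for all Z, and there are constants λ, Λ > 0 such that λ(1+|Z|)^(−μ)|Y|² ≤ D²F(Z)(Y,Y) ≤ Λ(1+|Z|)^(−1)|Y|² for all Y, Z ∈ ℝ^(2N). -/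
/-!
Write the derivative of `f` as `s * h s`, with derivative `p s`. Then `Z ↦ f ‖Z‖` has gradient
`h ‖Z‖ • Z`, which in turn is differentiable with Jacobian

  `H = h ‖Z‖ • 1 + (p ‖Z‖ - h ‖Z‖) • û ⊗ û`,  `û = Z / ‖Z‖`.

So `H` acts as `p ‖Z‖` on the line through `Z` and as `h ‖Z‖` on its orthogonal complement. For
`f s = ∫₀ˢ ∫₀ʳ p`, the function `h` is the mean value of `p` over `[0, s]`. If `p` decreases then
`p s ≤ h s`, so these two numbers are the lower and upper ellipticity constants. For
`p r = (1 + r) ^ (-μ)` with `1 < μ` the integral `s * h s` of `p` is at most `1 / (μ - 1)`, which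
bounds the gradient and makes `h s` decay like `1 / (1 + s)`.
-/

open Set Filter Topology MeasureTheory InnerProductSpace
open scoped RealInnerProductSpace

section InitialMean

variable {p : ℝ → ℝ}

/-- The mean value of `p` over `[0, s]`. Rescaling the interval to `[0, 1]` avoids dividing by `s`,
so that the value at `s = 0` is `p 0`. -/
noncomputable def initialMean (p : ℝ → ℝ) (s : ℝ) : ℝ := ∫ t in (0 : ℝ)..1, p (s * t)

theorem initialMean_zero (p : ℝ → ℝ) : initialMean p 0 = p 0 := by
  simp [initialMean]

theorem mul_initialMean (p : ℝ → ℝ) (s : ℝ) : s * initialMean p s = ∫ r in (0 : ℝ)..s, p r := by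
  simpa only [initialMean, smul_eq_mul, mul_zero, mul_one] using
    intervalIntegral.smul_integral_comp_mul_left (a := 0) (b := 1) p s

theorem continuous_initialMean (hp : Continuous p) : Continuous (initialMean p) := by
  unfold initialMean
  fun_prop

theorem hasDerivAt_mul_initialMean (hp : Continuous p) (s : ℝ) :
    HasDerivAt (fun s => s * initialMean p s) (p s) s := by
  simpa only [mul_initialMean] using (hp.integral_hasStrictDerivAt 0 s).hasDerivAt

theorem hasDerivAt_initialMean (hp : Continuous p) {s : ℝ} (hs : s ≠ 0) :
    HasDerivAt (initialMean p) ((p s - initialMean p s) / s) s := by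
  have hquot := (hasDerivAt_mul_initialMean hp s).div (hasDerivAt_id' s) hs
  have heq : initialMean p =ᶠ[𝓝 s] fun r => r * initialMean p r / r := by
    filter_upwards [eventually_ne_nhds hs] with r hr
    rw [mul_div_cancel_left₀ _ hr]
  refine (hquot.congr_of_eventuallyEq heq).congr_deriv ?_
  field_simp

theorem antitoneOn_comp_mul_left (hp : AntitoneOn p (Ici 0)) {s : ℝ} (hs : 0 ≤ s) :
    AntitoneOn (fun t => p (s * t)) (Ici 0) := fun _ hx _ hy hxy =>
  hp (mul_nonneg hs hx) (mul_nonneg hs hy) (mul_le_mul_of_nonneg_left hxy hs)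

theorem intervalIntegrable_comp_mul_left (hp : AntitoneOn p (Ici 0)) {s : ℝ} (hs : 0 ≤ s) :
    IntervalIntegrable (fun t => p (s * t)) volume 0 1 :=
  ((antitoneOn_comp_mul_left hp hs).mono (by simp [Icc_subset_Ici_self])).intervalIntegrable

theorem le_initialMean (hp : AntitoneOn p (Ici 0)) {s : ℝ} (hs : 0 ≤ s) :
    p s ≤ initialMean p s := by
  have hmono : ∫ _ in (0 : ℝ)..1, p s ≤ initialMean p s :=
    intervalIntegral.integral_mono_on zero_le_one intervalIntegrable_const
      (intervalIntegrable_comp_mul_left hp hs) fun t ht =>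
        hp (mul_nonneg hs ht.1) hs (mul_le_of_le_one_right hs ht.2)
  simpa using hmono

theorem initialMean_le (hp : AntitoneOn p (Ici 0)) {s : ℝ} (hs : 0 ≤ s) :
    initialMean p s ≤ p 0 := by
  have hmono : initialMean p s ≤ ∫ _ in (0 : ℝ)..1, p 0 :=
    intervalIntegral.integral_mono_on zero_le_one
      (intervalIntegrable_comp_mul_left hp hs) intervalIntegrable_const fun t ht =>
        hp self_mem_Ici (mul_nonneg hs ht.1) (mul_nonneg hs ht.1)
  simpa using hmono

end InitialMean

section NormedSpaces

variable {V : Type*} [NormedAddCommGroup V] {p q : ℝ → ℝ}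

/-- The function `Z ↦ ∫₀^‖Z‖ ∫₀ˢ p r dr ds`, whose second radial derivative is `p`. -/
noncomputable def radialPotential (p : ℝ → ℝ) (Z : V) : ℝ :=
  ∫ s in (0 : ℝ)..‖Z‖, ∫ r in (0 : ℝ)..s, p r

theorem radialPotential_congr (h : EqOn p q (Ici 0)) :
    (radialPotential p : V → ℝ) = radialPotential q := by
  funext Z
  refine intervalIntegral.integral_congr fun s hs => intervalIntegral.integral_congr fun r hr => ?_
  rw [uIcc_of_le (norm_nonneg Z)] at hs
  rw [uIcc_of_le hs.1] at hr
  exact h hr.1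

theorem hasFDerivAt_smul_self_zero {𝕜 : Type*} [NontriviallyNormedField 𝕜] [NormedSpace 𝕜 V]
    {h : V → 𝕜} (hh : ContinuousAt h 0) :
    HasFDerivAt (fun v => h v • v) (h 0 • ContinuousLinearMap.id 𝕜 V) 0 := by
  have hsmall : (fun v => h v - h 0) =o[𝓝 0] fun _ => (1 : 𝕜) :=
    (Asymptotics.isLittleO_one_iff 𝕜).2 (by simpa using hh.tendsto.sub_const (h 0))
  refine .of_isLittleO ((hsmall.smul_isBigO (Asymptotics.isBigO_refl (fun v : V => v) _)).congr
    (fun v => ?_) fun v => ?_)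
  · simp [sub_smul]
  · simp

variable [NormedSpace ℝ V]

theorem norm_normalize_le_one (Z : V) : ‖NormedSpace.normalize Z‖ ≤ 1 := by
  simpa [NormedSpace.normalize, norm_smul] using inv_mul_le_one

/-- The gradient `Z ↦ h ‖Z‖ • Z` of `radialPotential p`, where `h = initialMean p`. -/
noncomputable def radialField (p : ℝ → ℝ) (Z : V) : V := initialMean p ‖Z‖ • Z

theorem norm_radialField (p : ℝ → ℝ) (Z : V) :
    ‖radialField p Z‖ = |∫ r in (0 : ℝ)..‖Z‖, p r| := by
  rw [radialField, norm_smul, ← mul_initialMean, abs_mul, abs_norm, Real.norm_eq_abs, mul_comm]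

end NormedSpaces

section InnerProductSpaces

variable {E : Type*} [NormedAddCommGroup E] [InnerProductSpace ℝ E] {p : ℝ → ℝ}

theorem hasFDerivAt_norm_of_ne_zero {Z : E} (hZ : Z ≠ 0) :
    HasFDerivAt (fun z : E => ‖z‖) (innerSL ℝ (NormedSpace.normalize Z)) Z := by
  have hsqrt := (hasStrictFDerivAt_norm_sq Z).hasFDerivAt.sqrt (by positivity)
  simp only [Real.sqrt_sq (norm_nonneg _)] at hsqrt
  refine hsqrt.congr_fderiv ?_
  ext Y
  simp only [one_div, mul_inv_rev, smul_apply, coe_innerSL_apply, nsmul_eq_mul, Nat.cast_ofNat,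
    smul_eq_mul, NormedSpace.normalize, map_smul]
  field_simp

theorem hasFDerivAt_comp_norm {f : ℝ → ℝ} {c : ℝ} {Z : E} (hf : HasDerivAt f (‖Z‖ * c) ‖Z‖) :
    HasFDerivAt (fun z : E => f ‖z‖) (innerSL ℝ (c • Z)) Z := by
  rcases eq_or_ne Z 0 with rfl | hZ
  · have hnorm : Tendsto (fun z : E => ‖z‖) (𝓝 0) (𝓝 ‖(0 : E)‖) := continuous_norm.continuousAt
    refine .of_isLittleO (Asymptotics.IsLittleO.of_norm_right ?_)
    simpa [Function.comp_def] using (hf.isLittleO.comp_tendsto hnorm).norm_right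
  · refine (hf.comp_hasFDerivAt Z (hasFDerivAt_norm_of_ne_zero hZ)).congr_fderiv ?_
    ext Y
    have hnorm : ‖Z‖ ≠ 0 := norm_ne_zero_iff.2 hZ
    simp only [NormedSpace.normalize, map_smul, smul_apply, coe_innerSL_apply, smul_eq_mul]
    field_simp

/-- The Hessian of `radialPotential p` at `Z`, as an operator: multiplication by `p ‖Z‖` along `Z`
and by `initialMean p ‖Z‖` orthogonally to `Z`. At `Z = 0` the convention `‖0‖⁻¹ = 0` makes the
rank-one term vanish, which is right because `initialMean p 0 = p 0`. -/
noncomputable def radialHessian (p : ℝ → ℝ) (Z : E) : E →L[ℝ] E :=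
  initialMean p ‖Z‖ • ContinuousLinearMap.id ℝ E +
    (p ‖Z‖ - initialMean p ‖Z‖) • rankOne ℝ (NormedSpace.normalize Z) (NormedSpace.normalize Z)

theorem hasFDerivAt_radialPotential (hp : Continuous p) (Z : E) :
    HasFDerivAt (radialPotential p) (innerSL ℝ (radialField p Z)) Z := by
  have hprimitive : Continuous fun s => ∫ r in (0 : ℝ)..s, p r := by fun_prop
  refine hasFDerivAt_comp_norm (f := fun u => ∫ s in (0 : ℝ)..u, ∫ r in (0 : ℝ)..s, p r) ?_
  rw [mul_initialMean]
  exact (hprimitive.integral_hasStrictDerivAt 0 ‖Z‖).hasDerivAt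

theorem hasFDerivAt_radialField (hp : Continuous p) (Z : E) :
    HasFDerivAt (radialField p) (radialHessian p Z) Z := by
  rcases eq_or_ne Z 0 with rfl | hZ
  · have hmean : ContinuousAt (fun z : E => initialMean p ‖z‖) 0 :=
      ((continuous_initialMean hp).comp continuous_norm).continuousAt
    exact (hasFDerivAt_smul_self_zero hmean).congr_fderiv (by simp [radialHessian])
  · have hnorm : ‖Z‖ ≠ 0 := norm_ne_zero_iff.2 hZ
    have hmean := (hasDerivAt_initialMean hp hnorm).comp_hasFDerivAt Z
      (hasFDerivAt_norm_of_ne_zero hZ)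
    refine (hmean.smul (hasFDerivAt_id Z)).congr_fderiv ?_
    ext Y
    simp only [radialHessian, NormedSpace.normalize, Function.comp_apply, map_smul, smul_smul,
      id_eq, add_apply, smul_apply, ContinuousLinearMap.id_apply,
      ContinuousLinearMap.smulRight_apply, coe_innerSL_apply, smul_eq_mul, rankOne_apply]
    congr 1
    field_simp

theorem continuous_radialHessian (hp : Continuous p) :
    Continuous (radialHessian p : E → E →L[ℝ] E) := by
  have hmean : Continuous fun Z : E => initialMean p ‖Z‖ :=
    (continuous_initialMean hp).comp continuous_norm
  have hdiff : Continuous fun Z : E => p ‖Z‖ - initialMean p ‖Z‖ :=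
    (hp.comp continuous_norm).sub hmean
  refine (hmean.smul continuous_const).add (continuous_iff_continuousAt.2 fun Z => ?_)
  rcases eq_or_ne Z 0 with rfl | hZ
  · -- The rank-one factor stays bounded while its coefficient tends to zero.
    have hcoeff : Tendsto (fun Z : E => p ‖Z‖ - initialMean p ‖Z‖) (𝓝 0) (𝓝 0) := by
      simpa [initialMean_zero] using hdiff.tendsto 0
    have hbounded (Y : E) :
        ‖rankOne ℝ (NormedSpace.normalize Y) (NormedSpace.normalize Y)‖ ≤ 1 := by
      rw [norm_rankOne]
      exact mul_le_one₀ (norm_normalize_le_one Y) (norm_nonneg _) (norm_normalize_le_one Y)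
    simpa [ContinuousAt] using
      hcoeff.zero_smul_isBoundedUnder_le (isBoundedUnder_of ⟨1, hbounded⟩)
  · have hnormalize : ContinuousAt (NormedSpace.normalize : E → E) Z :=
      (continuous_norm.continuousAt.inv₀ (norm_ne_zero_iff.2 hZ)).smul continuousAt_id
    exact hdiff.continuousAt.smul
      (((rankOne ℝ).continuous.continuousAt.comp hnormalize).clm_apply hnormalize)

theorem contDiff_two_radialPotential (hp : Continuous p) :
    ContDiff ℝ 2 (radialPotential p : E → ℝ) := by
  have hfield : ContDiff ℝ 1 (radialField p : E → E) :=
    contDiff_one_iff_hasFDerivAt.2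
      ⟨radialHessian p, continuous_radialHessian hp, hasFDerivAt_radialField hp⟩
  exact contDiff_succ_iff_hasFDerivAt (n := 1).2
    ⟨fun Z => innerSL ℝ (radialField p Z), (innerSL ℝ).contDiff.comp hfield,
      hasFDerivAt_radialPotential hp⟩

theorem gradient_radialPotential [CompleteSpace E] (hp : Continuous p) (Z : E) :
    gradient (radialPotential p) Z = radialField p Z :=
  (hasGradientAt_iff_hasFDerivAt.2 (hasFDerivAt_radialPotential hp Z)).gradient

theorem iteratedFDeriv_two_radialPotential (hp : Continuous p) (Z X Y : E) :
    iteratedFDeriv ℝ 2 (radialPotential p) Z ![X, Y] = ⟪radialHessian p Z X, Y⟫ := by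
  have hfderiv : fderiv ℝ (radialPotential p) = fun Z : E => innerSL ℝ (radialField p Z) :=
    funext fun Z => (hasFDerivAt_radialPotential hp Z).fderiv
  have hsecond := (innerSL ℝ (E := E)).hasFDerivAt.comp Z (hasFDerivAt_radialField hp Z)
  rw [iteratedFDeriv_two_apply, hfderiv]
  exact DFunLike.congr_fun (DFunLike.congr_fun hsecond.fderiv X) Y

theorem inner_radialHessian_self (p : ℝ → ℝ) (Z Y : E) :
    ⟪radialHessian p Z Y, Y⟫ =
      initialMean p ‖Z‖ * (‖Y‖ ^ 2 - ⟪NormedSpace.normalize Z, Y⟫ ^ 2) +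
        p ‖Z‖ * ⟪NormedSpace.normalize Z, Y⟫ ^ 2 := by
  simp only [radialHessian, add_apply, smul_apply, ContinuousLinearMap.id_apply, rankOne_apply,
    inner_add_left, real_inner_smul_left, real_inner_self_eq_norm_sq]
  ring

theorem inner_normalize_sq_le (Z Y : E) : ⟪NormedSpace.normalize Z, Y⟫ ^ 2 ≤ ‖Y‖ ^ 2 :=
  sq_le_sq.2 <| (abs_real_inner_le_norm _ Y).trans <| by
    simpa using mul_le_of_le_one_left (norm_nonneg Y) (norm_normalize_le_one Z)

theorem le_inner_radialHessian_self {Z : E} (h : p ‖Z‖ ≤ initialMean p ‖Z‖) (Y : E) :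
    p ‖Z‖ * ‖Y‖ ^ 2 ≤ ⟪radialHessian p Z Y, Y⟫ := by
  rw [inner_radialHessian_self]
  linarith [mul_le_mul_of_nonneg_right h (sub_nonneg.2 (inner_normalize_sq_le Z Y))]

theorem inner_radialHessian_self_le {Z : E} (h : p ‖Z‖ ≤ initialMean p ‖Z‖) (Y : E) :
    ⟪radialHessian p Z Y, Y⟫ ≤ initialMean p ‖Z‖ * ‖Y‖ ^ 2 := by
  rw [inner_radialHessian_self]
  linarith [mul_le_mul_of_nonneg_right h (sq_nonneg ⟪NormedSpace.normalize Z, Y⟫)]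

end InnerProductSpaces

section PowerDecay

variable {μ : ℝ}

/-- The profile `(1 + r) ^ (-μ)` on `[0, ∞)`, extended evenly so as to be continuous on `ℝ`. -/
noncomputable def powerDecay (μ r : ℝ) : ℝ := (1 + |r|) ^ (-μ)

theorem continuous_powerDecay (μ : ℝ) : Continuous (powerDecay μ) :=
  Continuous.rpow_const (by fun_prop) fun r => Or.inl (by positivity)

theorem powerDecay_nonneg (μ r : ℝ) : 0 ≤ powerDecay μ r := by
  unfold powerDecay
  positivity

theorem powerDecay_of_nonneg (μ : ℝ) {r : ℝ} (hr : 0 ≤ r) : powerDecay μ r = (1 + r) ^ (-μ) := by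
  rw [powerDecay, abs_of_nonneg hr]

theorem powerDecay_zero (μ : ℝ) : powerDecay μ 0 = 1 := by
  simp [powerDecay]

theorem antitoneOn_powerDecay (hμ : 0 ≤ μ) : AntitoneOn (powerDecay μ) (Ici 0) := by
  intro r (hr : 0 ≤ r) s (hs : 0 ≤ s) hrs
  rw [powerDecay_of_nonneg μ hr, powerDecay_of_nonneg μ hs]
  exact Real.rpow_le_rpow_of_nonpos (by positivity) (by gcongr) (neg_nonpos.2 hμ)

theorem integral_powerDecay (hμ : μ ≠ 1) {s : ℝ} (hs : 0 ≤ s) :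
    ∫ r in (0 : ℝ)..s, powerDecay μ r = (1 - (1 + s) ^ (1 - μ)) / (μ - 1) := by
  have hzero : (0 : ℝ) ∉ uIcc (1 + 0) (1 + s) := by
    rw [uIcc_of_le (by gcongr)]
    exact fun h => by linarith [h.1]
  calc ∫ r in (0 : ℝ)..s, powerDecay μ r
      = ∫ r in (0 : ℝ)..s, (1 + r) ^ (-μ) :=
        intervalIntegral.integral_congr fun r hr =>
          powerDecay_of_nonneg μ (by rw [uIcc_of_le hs] at hr; exact hr.1)
    _ = ∫ r in (1 + 0)..(1 + s), r ^ (-μ) :=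
        intervalIntegral.integral_comp_add_left (fun r => r ^ (-μ)) 1
    _ = ((1 + s) ^ (1 - μ) - 1) / (1 - μ) := by
        rw [integral_rpow (Or.inr ⟨fun h => hμ (neg_inj.1 h), hzero⟩), add_zero, Real.one_rpow,
          neg_add_eq_sub]
    _ = (1 - (1 + s) ^ (1 - μ)) / (μ - 1) := by
        rw [← neg_sub 1, ← neg_sub μ, neg_div_neg_eq]

theorem integral_powerDecay_le (hμ : 1 < μ) {s : ℝ} (hs : 0 ≤ s) :
    ∫ r in (0 : ℝ)..s, powerDecay μ r ≤ 1 / (μ - 1) := by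
  rw [integral_powerDecay hμ.ne' hs]
  exact div_le_div_of_nonneg_right (sub_le_self 1 (by positivity)) (sub_pos.2 hμ).le

theorem initialMean_powerDecay_le (hμ : 1 < μ) {s : ℝ} (hs : 0 ≤ s) :
    initialMean (powerDecay μ) s ≤ (1 + 1 / (μ - 1)) * (1 + s)⁻¹ := by
  have hmean : initialMean (powerDecay μ) s ≤ 1 := by
    simpa only [powerDecay_zero] using initialMean_le (antitoneOn_powerDecay (by linarith)) hs
  rw [← div_eq_mul_inv, le_div_iff₀ (by positivity), mul_add, mul_one, mul_comm _ s,
    mul_initialMean]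
  exact add_le_add hmean (integral_powerDecay_le hμ hs)

end PowerDecay

theorem statement7_general {E : Type*} [NormedAddCommGroup E] [InnerProductSpace ℝ E]
    [CompleteSpace E] (μ : ℝ) (hμ : 1 < μ) (F : E → ℝ)
    (hFdef : ∀ Z, F Z = ∫ s in (0 : ℝ)..‖Z‖, ∫ r in (0 : ℝ)..s, (1 + r) ^ (-μ)) :
    ContDiff ℝ 2 F ∧
    (∃ M : ℝ, 0 < M ∧ ∀ Z, ‖gradient F Z‖ ≤ M) ∧
    (∃ lam Lam : ℝ, 0 < lam ∧ 0 < Lam ∧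
      ∀ Z Y : E,
        lam * (1 + ‖Z‖) ^ (-μ) * ‖Y‖ ^ 2 ≤ iteratedFDeriv ℝ 2 F Z ![Y, Y] ∧
        iteratedFDeriv ℝ 2 F Z ![Y, Y] ≤ Lam * (1 + ‖Z‖)⁻¹ * ‖Y‖ ^ 2) := by
  have hp := continuous_powerDecay μ
  have hF : F = radialPotential (powerDecay μ) := by
    rw [radialPotential_congr fun r hr => powerDecay_of_nonneg μ hr]
    exact funext hFdef
  have hbound : 0 < 1 / (μ - 1) := one_div_pos.2 (sub_pos.2 hμ)
  subst hF
  refine ⟨contDiff_two_radialPotential hp, ⟨1 / (μ - 1), hbound, fun Z => ?_⟩,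
    ⟨1, 1 + 1 / (μ - 1), one_pos, add_pos one_pos hbound, fun Z Y => ?_⟩⟩
  · rw [gradient_radialPotential hp, norm_radialField, abs_of_nonneg]
    · exact integral_powerDecay_le hμ (norm_nonneg Z)
    · exact intervalIntegral.integral_nonneg (norm_nonneg Z) fun r _ => powerDecay_nonneg μ r
  · have hle : powerDecay μ ‖Z‖ ≤ initialMean (powerDecay μ) ‖Z‖ :=
      le_initialMean (antitoneOn_powerDecay (by linarith)) (norm_nonneg Z)
    rw [iteratedFDeriv_two_radialPotential hp, one_mul, ← powerDecay_of_nonneg μ (norm_nonneg Z)]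
    refine ⟨le_inner_radialHessian_self hle Y, (inner_radialHessian_self_le hle Y).trans ?_⟩
    gcongr
    exact initialMean_powerDecay_le hμ (norm_nonneg Z)

/-- for `μ > 1`, the density
`F(Z) = ∫₀^{|Z|} ∫₀^s (1+r)^{−μ} dr ds` on `ℝ^{2N}` is `C²`, has bounded gradient and
is `μ`-elliptic: `λ(1+|Z|)^{−μ}|Y|² ≤ D²F(Z)(Y,Y) ≤ Λ(1+|Z|)^{−1}|Y|²`. -/
theorem statement7 {N : ℕ} (μ : ℝ) (hμ : 1 < μ)
    (F : EuclideanSpace ℝ (Fin N × Fin 2) → ℝ)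
    (hFdef : ∀ Z, F Z = ∫ s in (0:ℝ)..‖Z‖, ∫ r in (0:ℝ)..s, (1 + r) ^ (-μ)) :
    ContDiff ℝ 2 F ∧
    (∃ M : ℝ, 0 < M ∧ ∀ Z, ‖gradient F Z‖ ≤ M) ∧
    (∃ lam Lam : ℝ, 0 < lam ∧ 0 < Lam ∧
      ∀ Z Y : EuclideanSpace ℝ (Fin N × Fin 2),
        lam * (1 + ‖Z‖) ^ (-μ) * ‖Y‖ ^ 2 ≤ iteratedFDeriv ℝ 2 F Z ![Y, Y] ∧
        iteratedFDeriv ℝ 2 F Z ![Y, Y] ≤ Lam * (1 + ‖Z‖)⁻¹ * ‖Y‖ ^ 2) :=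
  statement7_general μ hμ F hFdef
end
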